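/- Let S be a scheme and let s₁, s₂, s₃, s₁′, s₂′, s₃′ : S → ℙ¹_S be six sections of the structure morphism ℙ¹_S → S such that the images of s₁, s₂, s₃ are pairwise disjoint and the images of s₁′, s₂′, s₃′ are pairwise disjoint. Then there exists a unique S-automorphism β of ℙ¹_S such that β ∘ sᵢ = sᵢ′ for i = 1, 2, 3. -/

import Mathlib

universe u

open AlgebraicGeometry CategoryTheory CategoryTheory.Limits

attribute [local instance] MvPolynomial.gradedAlgebra

/-- The projective line over `ℤ`, i.e. `Proj ℤ[X₀, X₁]`. -/
noncomputable def P1Z : Scheme.{u} :=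
  AlgebraicGeometry.Proj (MvPolynomial.homogeneousSubmodule (Fin 2) (ULift.{u} ℤ))

/-- The projective line `ℙ¹_S` over a scheme `S`, i.e. the base change to `S` of
`Proj ℤ[X₀, X₁]` (the fibre product over the terminal scheme, which is `Spec ℤ`). -/
noncomputable def P1 (S : Scheme.{u}) : Scheme.{u} :=
  pullback (terminal.from S) (terminal.from P1Z)

/-- The structure morphism `ℙ¹_S ⟶ S`. -/
noncomputable def P1proj (S : Scheme.{u}) : P1 S ⟶ S :=
  pullback.fst (terminal.from S) (terminal.from P1Z)

/-! Existence: on small enough open subschemes, the sections have homogeneous coordinates, and two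
of them are disjoint exactly when the determinant of their coordinates is a unit. Hence an
invertible matrix, unique up to a scalar, carries one triple to the other. The relation between
points that it induces does not depend on any choice, so that the local isomorphisms glue.

Uniqueness: by the existence part it suffices to see that an automorphism fixing `0`, `∞` and `1` is
the identity. It preserves the complements of `0` and `∞`, so over `Spec R` it is given there by
polynomials `p` and `q` without constant terms, with `p(T) q(1/T) = 1`. As its inverse is also given
by a polynomial without constant term, `p = T r` with `r` a unit of `R[T]`. The first relation turns
`1 / r` into a polynomial in `1/T`, so it is a constant, and `p = T` because `p(1) = 1`. -/

section LocallyFunctional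

variable {X Y : Scheme.{u}}

/-- A relation between the `T`-valued points of `X` and those of `Y`, for varying `T`, is locally
functional if it is stable under base change, relates a point of `X` to at most one point of `Y`,
and relates the inclusions of small enough open subschemes of `X` to some point of `Y`. Such a
relation defines a morphism `X ⟶ Y`. -/
structure IsLocallyFunctional (P : ∀ ⦃T : Scheme.{u}⦄, (T ⟶ X) → (T ⟶ Y) → Prop) : Prop where
  comp ⦃T T' : Scheme.{u}⦄ (f : T' ⟶ T) ⦃t : T ⟶ X⦄ ⦃h : T ⟶ Y⦄ : P t h → P (f ≫ t) (f ≫ h)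
  unique ⦃T : Scheme.{u}⦄ ⦃t : T ⟶ X⦄ ⦃h h' : T ⟶ Y⦄ : P t h → P t h' → h = h'
  exists_local (x : X) : ∃ (T : Scheme.{u}) (t : T ⟶ X) (h : T ⟶ Y),
    IsOpenImmersion t ∧ x ∈ Set.range t ∧ P t h

namespace IsLocallyFunctional

variable {P : ∀ ⦃T : Scheme.{u}⦄, (T ⟶ X) → (T ⟶ Y) → Prop}

lemma exists_openCover (hP : IsLocallyFunctional P) :
    ∃ (𝒰 : Scheme.OpenCover.{u} X) (h : ∀ i, 𝒰.X i ⟶ Y), ∀ i, P (𝒰.f i) (h i) := by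
  choose T t h ht hx hth using hP.exists_local
  refine ⟨{ I₀ := X, X := T, f := t, mem₀ := ?_ }, h, hth⟩
  rw [Scheme.presieve₀_mem_precoverage_iff]
  exact ⟨fun x ↦ ⟨x, hx x⟩, ht⟩

lemma exists_hom (hP : IsLocallyFunctional P) :
    ∃ H : X ⟶ Y, ∀ ⦃T : Scheme.{u}⦄ ⦃t : T ⟶ X⦄ ⦃h : T ⟶ Y⦄, P t h → t ≫ H = h := by
  obtain ⟨𝒰, h, hP𝒰⟩ := hP.exists_openCover
  have comp_eq {T : Scheme.{u}} {t : T ⟶ X} {k : T ⟶ Y} (htk : P t k) (i : 𝒰.I₀) :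
      pullback.fst t (𝒰.f i) ≫ k = pullback.snd t (𝒰.f i) ≫ h i :=
    hP.unique (hP.comp _ htk) (pullback.condition (f := t) ▸ hP.comp _ (hP𝒰 i))
  refine ⟨𝒰.glueMorphisms h fun i j ↦ comp_eq (hP𝒰 i) j, fun T t k htk ↦ ?_⟩
  refine Scheme.Cover.hom_ext (𝒰.pullback₁ t) _ _ fun i ↦ ?_
  exact (pullback.condition_assoc _).trans <|
    (congrArg (_ ≫ ·) (𝒰.ι_glueMorphisms h _ i)).trans (comp_eq htk i).symm

lemma exists_iso (hP : IsLocallyFunctional P)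
    (hP' : IsLocallyFunctional fun T (h : T ⟶ Y) (t : T ⟶ X) ↦ P t h) :
    ∃ e : X ≅ Y, ∀ ⦃T : Scheme.{u}⦄ ⦃t : T ⟶ X⦄ ⦃h : T ⟶ Y⦄, P t h → t ≫ e.hom = h := by
  obtain ⟨F, hF⟩ := hP.exists_hom
  obtain ⟨G, hG⟩ := hP'.exists_hom
  obtain ⟨𝒰, h, hP𝒰⟩ := hP.exists_openCover
  obtain ⟨𝒱, t, hP𝒱⟩ := hP'.exists_openCover
  refine ⟨⟨F, G, Scheme.Cover.hom_ext 𝒰 _ _ fun i ↦ ?_, Scheme.Cover.hom_ext 𝒱 _ _ fun i ↦ ?_⟩, hF⟩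
  · rw [← Category.assoc, hF (hP𝒰 i), hG (hP𝒰 i), Category.comp_id]
  · rw [← Category.assoc, hG (hP𝒱 i), hF (hP𝒱 i), Category.comp_id]

end IsLocallyFunctional

end LocallyFunctional

section Polynomial

open Polynomial

variable {R : Type*} [CommRing R]

lemma coeff_invert_toLaurent_succ (q : R[X]) (n : ℕ) :
    (LaurentPolynomial.invert (toLaurent q)).coeff ((n + 1 : ℕ) : ℤ) = 0 := by
  rw [LaurentPolynomial.invert_apply, LaurentPolynomial.coeff_toLaurent]
  refine Finsupp.mapDomain_of_notMem_range _ _ ?_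
  rintro ⟨m, hm : (m : ℤ) = -((n + 1 : ℕ) : ℤ)⟩
  omega

lemma coeff_toLaurent_natCast (p : R[X]) (n : ℕ) : (toLaurent p).coeff (n : ℤ) = p.coeff n := by
  rw [LaurentPolynomial.coeff_toLaurent]
  exact Finsupp.mapDomain_apply Nat.cast_injective _ _

lemma eq_C_of_toLaurent_eq_invert_toLaurent {p q : R[X]}
    (h : toLaurent p = LaurentPolynomial.invert (toLaurent q)) : p = C (p.coeff 0) := by
  ext n
  cases n with
  | zero => rw [coeff_C_zero]
  | succ n =>
    rw [coeff_C_succ, ← coeff_toLaurent_natCast, h, coeff_invert_toLaurent_succ]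

lemma T_one_mul_T_neg_one :
    (LaurentPolynomial.T 1 * LaurentPolynomial.T (-1) : LaurentPolynomial R) = 1 := by
  rw [← LaurentPolynomial.T_add, add_neg_cancel, LaurentPolynomial.T_zero]

lemma eval₂_C_T_one (p : R[X]) :
    p.eval₂ LaurentPolynomial.C (LaurentPolynomial.T 1) = toLaurent p := by
  have h : eval₂RingHom LaurentPolynomial.C (LaurentPolynomial.T 1) = toLaurent (R := R) :=
    Polynomial.ringHom_ext (by simp) (by simp)
  exact RingHom.congr_fun h p

lemma eval₂_C_T_neg_one (p : R[X]) :
    p.eval₂ LaurentPolynomial.C (LaurentPolynomial.T (-1)) =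
      LaurentPolynomial.invert (toLaurent p) := by
  have h : eval₂RingHom LaurentPolynomial.C (LaurentPolynomial.T (-1)) =
      (LaurentPolynomial.invert (R := R)).toRingEquiv.toRingHom.comp toLaurent :=
    Polynomial.ringHom_ext (by simp) (by simp)
  exact RingHom.congr_fun h p

lemma exists_eq_X_mul_of_eval_zero {p : R[X]} (hp : p.eval 0 = 0) : ∃ q, p = X * q :=
  X_dvd_iff.mpr (coeff_zero_eq_eval_zero p ▸ hp)

lemma eq_X_of_toLaurent_mul_invert_eq_one {p p' q : R[X]} (hp : p.eval 0 = 0)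
    (hp' : p'.eval 0 = 0) (hq : q.eval 0 = 0) (hp₁ : p.eval 1 = 1) (hp'p : p'.comp p = X)
    (hpq : toLaurent p * LaurentPolynomial.invert (toLaurent q) = 1) : p = X := by
  obtain ⟨r, rfl⟩ := exists_eq_X_mul_of_eval_zero hp
  obtain ⟨r', rfl⟩ := exists_eq_X_mul_of_eval_zero hp'
  obtain ⟨t, rfl⟩ := exists_eq_X_mul_of_eval_zero hq
  set u := r'.comp (X * r)
  have hru : r * u = 1 := by
    rw [mul_comp, X_comp, mul_assoc] at hp'p
    exact isRegular_X.left (hp'p.trans (mul_one X).symm)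
  have hrt : toLaurent r * LaurentPolynomial.invert (toLaurent t) = 1 := by
    simp only [map_mul, toLaurent_X, LaurentPolynomial.invert_T] at hpq
    linear_combination hpq - toLaurent r * LaurentPolynomial.invert (toLaurent t) *
      T_one_mul_T_neg_one (R := R)
  have hut : toLaurent u = LaurentPolynomial.invert (toLaurent t) :=
    left_inv_eq_right_inv (by rw [← map_mul, mul_comm, hru, map_one]) hrt
  have hr₁ : r.eval 1 = 1 := by
    rwa [eval_mul, eval_X, one_mul] at hp₁
  have hu : u = 1 := by
    have hu₁ : u.eval 1 = 1 := by
      have := congrArg (eval 1) hru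
      rwa [eval_mul, hr₁, one_mul, eval_one] at this
    have hC := eq_C_of_toLaurent_eq_invert_toLaurent hut
    rw [hC, eval_C] at hu₁
    rw [hC, hu₁, C_1]
  rw [← mul_one r, ← hu, hru, mul_one]

end Polynomial

namespace P1Z

section Wedge

open Matrix

variable {R R' : Type*} [CommRing R] [CommRing R'] {v w : Fin 2 → R} {p q : Fin 3 → Fin 2 → R}

/-- The determinant of the `2 × 2` matrix with columns `v` and `w`. It measures how far the points
with homogeneous coordinates `v` and `w` are from being equal. -/
def wedge (v w : Fin 2 → R) : R :=
  v 0 * w 1 - v 1 * w 0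

lemma map_wedge (f : R →+* R') (v w : Fin 2 → R) : wedge (f ∘ v) (f ∘ w) = f (wedge v w) := by
  simp [wedge]

lemma wedge_smul_eq (p q v : Fin 2 → R) : wedge p q • v = wedge v q • p + wedge p v • q := by
  ext i
  fin_cases i <;> simp [wedge] <;> ring

lemma wedge_self (v : Fin 2 → R) : wedge v v = 0 :=
  sub_eq_zero.mpr (mul_comm _ _)

lemma wedge_eq_zero_of_forall {i : Fin 2} (h : ∀ j, v j * w i = v i * w j) : wedge v w = 0 := by
  match i with
  | 0 => exact sub_eq_zero.mpr (h 1).symm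
  | 1 => exact sub_eq_zero.mpr (h 0)

lemma isCoprime_of_isUnit {i : Fin 2} (hv : IsUnit (v i)) : IsCoprime (v 0) (v 1) := by
  obtain ⟨a, ha⟩ := isUnit_iff_exists_inv'.mp hv
  match i with
  | 0 => exact ⟨a, 0, by linear_combination ha⟩
  | 1 => exact ⟨0, a, by linear_combination ha⟩

lemma isCoprime_mulVec (M : GL (Fin 2) R) (hv : IsCoprime (v 0) (v 1)) :
    IsCoprime ((M.val *ᵥ v) 0) ((M.val *ᵥ v) 1) := by
  obtain ⟨a, b, hab⟩ := hv
  have hM : ![a, b] ᵥ* M⁻¹.val ⬝ᵥ M.val *ᵥ v = 1 := by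
    rw [← dotProduct_mulVec, mulVec_mulVec, ← Units.val_mul, inv_mul_cancel, Units.val_one,
      one_mulVec]
    simpa [dotProduct] using hab
  exact ⟨_, _, by simpa only [dotProduct, Fin.sum_univ_two] using hM⟩

lemma exists_eq_smul_of_wedge_eq_zero (hv : IsCoprime (v 0) (v 1)) (h : wedge v w = 0) :
    ∃ c : R, w = c • v := by
  obtain ⟨a, b, hab⟩ := hv
  rw [wedge] at h
  refine ⟨a * w 0 + b * w 1, funext fun i ↦ ?_⟩
  match i with
  | 0 => simp only [Pi.smul_apply, smul_eq_mul]; linear_combination -w 0 * hab - b * h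
  | 1 => simp only [Pi.smul_apply, smul_eq_mul]; linear_combination -w 1 * hab + a * h

lemma isUnit_of_isCoprime_smul {c : R} (h : IsCoprime ((c • v) 0) ((c • v) 1)) : IsUnit c := by
  obtain ⟨a, b, hab⟩ := h
  simp only [Pi.smul_apply, smul_eq_mul] at hab
  exact .of_mul_eq_one (a * v 0 + b * v 1) (by linear_combination hab)

lemma exists_mulVec_eq_smul (hp : Pairwise fun i j ↦ IsUnit (wedge (p i) (p j)))
    (hq : Pairwise fun i j ↦ IsUnit (wedge (q i) (q j))) :
    ∃ M : GL (Fin 2) R, ∀ k, ∃ c : R, IsUnit c ∧ M.val *ᵥ p k = c • q k := by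
  -- `v ↦ a * (v ∧ p₁) • q₀ + b * (v ∧ p₀) • q₁`, with `a` and `b` chosen so that `p₂ ↦ q₂`.
  let a := wedge (q 2) (q 1) * wedge (p 2) (p 0)
  let b := wedge (q 0) (q 2) * wedge (p 2) (p 1)
  let M : Matrix (Fin 2) (Fin 2) R :=
    !![q 0 0, q 1 0; q 0 1, q 1 1] * diagonal ![a, b] * !![p 1 1, -p 1 0; p 0 1, -p 0 0]
  have hM (v : Fin 2 → R) : M *ᵥ v = (a * wedge v (p 1)) • q 0 + (b * wedge v (p 0)) • q 1 := by
    rw [← mulVec_mulVec, ← mulVec_mulVec]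
    ext i
    fin_cases i <;> simp [wedge, vecHead, vecTail] <;> ring
  have hdet : M.det = wedge (q 0) (q 1) * (a * b) * wedge (p 1) (p 0) := by
    simp only [M, det_mul, det_diagonal, det_fin_two_of, Fin.prod_univ_two, wedge, cons_val_zero,
      cons_val_one]
    ring
  have ha : IsUnit a := (hq (by decide)).mul (hp (by decide))
  have hb : IsUnit b := (hq (by decide)).mul (hp (by decide))
  refine ⟨GeneralLinearGroup.mk'' M
    (hdet ▸ ((hq (by decide)).mul (ha.mul hb)).mul (hp (by decide))), fun k ↦ ?_⟩
  change ∃ c, IsUnit c ∧ M *ᵥ p k = c • q k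
  rw [hM]
  match k with
  | 0 => exact ⟨a * wedge (p 0) (p 1), ha.mul (hp (by decide)), by simp [wedge_self]⟩
  | 1 => exact ⟨b * wedge (p 1) (p 0), hb.mul (hp (by decide)), by simp [wedge_self]⟩
  | 2 =>
    refine ⟨wedge (p 2) (p 0) * wedge (p 2) (p 1) * wedge (q 0) (q 1),
      ((hp (by decide)).mul (hp (by decide))).mul (hq (by decide)), ?_⟩
    rw [← smul_smul _ (wedge (q 0) (q 1)), wedge_smul_eq]
    module

lemma mulVec_eq_smul_of_forall (hp : Pairwise fun i j ↦ IsUnit (wedge (p i) (p j)))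
    {M : Matrix (Fin 2) (Fin 2) R} {c : Fin 3 → R} (h : ∀ k, M *ᵥ p k = c k • p k)
    (v : Fin 2 → R) : M *ᵥ v = c 2 • v := by
  have hM (v : Fin 2 → R) : wedge (p 0) (p 1) • M *ᵥ v =
      (c 0 * wedge v (p 1)) • p 0 + (c 1 * wedge (p 0) v) • p 1 := by
    rw [← mulVec_smul, wedge_smul_eq, mulVec_add, mulVec_smul, mulVec_smul, h, h, smul_smul,
      smul_smul, mul_comm (c 0), mul_comm (c 1)]
  have h₂ : c 2 • wedge (p 0) (p 1) • p 2 =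
      (c 0 * wedge (p 2) (p 1)) • p 0 + (c 1 * wedge (p 0) (p 2)) • p 1 := by
    rw [← hM, h, smul_comm]
  have hfst := congrFun h₂ 0
  have hsnd := congrFun h₂ 1
  simp only [wedge, Pi.smul_apply, Pi.add_apply, smul_eq_mul] at hfst hsnd
  have h₀ : c 0 = c 2 := by
    have hu : IsUnit (wedge (p 2) (p 1) * wedge (p 0) (p 1)) :=
      (hp (by decide)).mul (hp (by decide))
    refine hu.mul_right_cancel ?_
    simp only [wedge]
    linear_combination p 1 0 * hsnd - p 1 1 * hfst
  have h₁ : c 1 = c 2 := by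
    have hu : IsUnit (wedge (p 0) (p 2) * wedge (p 0) (p 1)) :=
      (hp (by decide)).mul (hp (by decide))
    refine hu.mul_right_cancel ?_
    simp only [wedge]
    linear_combination p 0 1 * hfst - p 0 0 * hsnd
  refine (hp (show (0 : Fin 3) ≠ 1 by decide)).smul_left_cancel.mp ?_
  rw [hM, smul_comm, wedge_smul_eq, h₀, h₁, smul_add, smul_smul, smul_smul]

end Wedge

open HomogeneousLocalization MvPolynomial

/-- The homogeneous coordinate ring `ℤ[X₀, X₁]` of the projective line. -/
abbrev CoordRing : Type u :=
  MvPolynomial (Fin 2) (ULift.{u} ℤ)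

/-- The grading of `ℤ[X₀, X₁]` by degree. -/
abbrev grading : ℕ → Submodule (ULift.{u} ℤ) CoordRing.{u} :=
  homogeneousSubmodule (Fin 2) (ULift.{u} ℤ)

lemma X_mem_grading (i : Fin 2) : X i ∈ grading.{u} 1 :=
  isHomogeneous_X _ i

/-- The standard affine chart `{Xᵢ ≠ 0}` of the projective line. -/
noncomputable def chart (i : Fin 2) : P1Z.{u}.Opens :=
  Proj.basicOpen grading (X i)

/-- The fraction `Xⱼ / Xᵢ` in the degree zero part of `ℤ[X₀, X₁][1 / Xᵢ]`. -/
noncomputable def ratio (i j : Fin 2) : Away grading.{u} (X i) :=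
  Away.mk grading (X_mem_grading i) 1 (X j) (by simpa using X_mem_grading j)

lemma adjoin_range_X :
    Algebra.adjoin (grading.{u} 0)
      (Set.range (X : Fin 2 → CoordRing.{u})) = ⊤ := by
  refine eq_top_iff.mpr fun p _ ↦ ?_
  induction p using MvPolynomial.induction_on with
  | C a => exact Subalgebra.algebraMap_mem _ (⟨C a, isHomogeneous_C _ a⟩ : grading.{u} 0)
  | add p q hp hq => exact add_mem (hp trivial) (hq trivial)
  | mul_X p n hp => exact mul_mem (hp trivial) (Algebra.subset_adjoin ⟨n, rfl⟩)

lemma iSup_chart : ⨆ i, chart.{u} i = ⊤ :=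
  Proj.iSup_basicOpen_eq_top' grading X (fun i ↦ ⟨1, X_mem_grading i⟩) adjoin_range_X

lemma exists_mem_chart (x : P1Z.{u}) : ∃ i, x ∈ chart i :=
  TopologicalSpace.Opens.mem_iSup.mp (iSup_chart ▸ TopologicalSpace.Opens.mem_top x)

lemma mem_chart_of_notMem {i j : Fin 2} (h : i ≠ j) {x : P1Z.{u}} (hx : x ∉ chart j) :
    x ∈ chart i := by
  obtain ⟨k, hk⟩ := exists_mem_chart x
  have hkj : k ≠ j := fun hkj ↦ hx (hkj ▸ hk)
  rwa [show i = k by omega]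

lemma ratio_self (i : Fin 2) : ratio.{u} i i = 1 := by
  apply val_injective
  simp [ratio]

lemma exists_intCast_eq (r : grading.{u} 0) : ∃ n : ℤ, (n : grading.{u} 0) = r := by
  obtain ⟨p, hp⟩ := r
  obtain ⟨⟨n⟩, rfl⟩ : ∃ c, p = C c :=
    ⟨_, totalDegree_eq_zero_iff_eq_C.mp ((totalDegree_zero_iff_isHomogeneous _).mpr hp)⟩
  exact ⟨n, Subtype.ext (map_intCast (C : ULift.{u} ℤ →+* CoordRing.{u}) n).symm⟩

lemma away_mk_prod_eq (i : Fin 2) (n : ℕ) (d : Fin 2 → ℕ) (hd : ∑ j, d j • 1 = n • 1) :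
    Away.mk grading (X_mem_grading.{u} i) n (∏ j, X j ^ d j)
      (hd ▸ SetLike.prod_pow_mem_graded _ _ _ _ fun j _ ↦ X_mem_grading j) =
    ratio i 0 ^ d 0 * ratio i 1 ^ d 1 := by
  obtain rfl : d 0 + d 1 = n := by simpa using hd
  apply val_injective
  rw [val_mul, val_pow, val_pow]
  simp [ratio, Localization.mk_pow, Localization.mk_mul, pow_add]

lemma ringHom_away_ext {A : Type*} [CommRing A] {i : Fin 2} {f g : Away grading.{u} (X i) →+* A}
    (h : ∀ j, f (ratio i j) = g (ratio i j)) : f = g := by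
  ext x
  have hx := (Away.adjoin_mk_prod_pow_eq_top (X_mem_grading.{u} i) (Fin 2) X adjoin_range_X
    (fun _ ↦ 1) X_mem_grading).ge (Algebra.mem_top (x := x))
  induction hx using Algebra.adjoin_induction with
  | algebraMap r =>
    obtain ⟨n, rfl⟩ := exists_intCast_eq r
    have hn := map_intCast (fromZeroRingHom grading.{u} (.powers (X i))) n
    exact ((congrArg f hn).trans (map_intCast f n)).trans
      ((congrArg g hn).trans (map_intCast g n)).symm
  | mem y hy =>
    obtain ⟨n, d, hd, -, rfl⟩ := hy
    have map_pow_eq (j : Fin 2) : f (ratio i j ^ d j) = g (ratio i j ^ d j) :=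
      (map_pow f _ _).trans ((congrArg (· ^ d j) (h j)).trans (map_pow g _ _).symm)
    rw [away_mk_prod_eq i n d hd, map_mul, map_mul, map_pow_eq, map_pow_eq]
  | add y z _ _ hy hz => rw [map_add, map_add, hy, hz]
  | mul y z _ _ hy hz => rw [map_mul, map_mul, hy, hz]

variable {A : Type*} [CommRing A]

/-- Evaluation of integral polynomials at `v`. -/
noncomputable def evalHom (v : Fin 2 → A) : CoordRing.{u} →+* A :=
  eval₂Hom ((Int.castRingHom A).comp ULift.ringEquiv.toRingHom) v

/-- Evaluation of degree zero fractions with powers of `f` as denominators at a point `v` where `f`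
does not vanish. -/
noncomputable def evalAway (v : Fin 2 → A) (f : CoordRing.{u})
    (hf : IsUnit (evalHom v f)) : Away grading.{u} f →+* A :=
  (IsLocalization.Away.lift f hf).comp (algebraMap (Away grading.{u} f) (Localization.Away f))

lemma evalHom_X (v : Fin 2 → A) (j : Fin 2) : evalHom.{u} v (X j) = v j :=
  eval₂Hom_X' _ _ j

lemma evalAway_mul_eq {v : Fin 2 → A} {f : CoordRing.{u}}
    (hf : IsUnit (evalHom v f)) {x : Away grading.{u} f} {p q : CoordRing.{u}}
    (h : x.val * algebraMap _ (Localization.Away f) p = algebraMap _ _ q) :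
    evalAway v f hf x * evalHom v p = evalHom v q := by
  have := congrArg (IsLocalization.Away.lift f hf) h
  rwa [map_mul, IsLocalization.Away.lift_eq, IsLocalization.Away.lift_eq] at this

lemma val_ratio_mul (i j : Fin 2) :
    (ratio.{u} i j).val * algebraMap CoordRing (Localization.Away (X i)) (X i) =
      algebraMap CoordRing _ (X j) := by
  rw [ratio, Away.val_mk, Localization.mk_eq_mk']
  convert IsLocalization.mk'_spec (Localization.Away (X i : CoordRing.{u})) (X j)
    (⟨X i ^ 1, 1, rfl⟩ : Submonoid.powers (X i : CoordRing.{u}))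
  exact (pow_one _).symm

lemma val_awayMap_ratio_mul (i j k : Fin 2) {x : CoordRing.{u}} (hx : x = X i * X k) :
    (awayMap grading (X_mem_grading k) hx (ratio i j)).val *
      algebraMap CoordRing (Localization.Away x) (X i) = algebraMap CoordRing _ (X j) := by
  rw [val_awayMap]
  generalize_proofs h
  have := congrArg (Localization.awayLift (algebraMap _ (Localization.Away x)) _ h)
    (val_ratio_mul i j)
  simpa only [Localization.awayLift, map_mul, IsLocalization.Away.lift_eq] using this

/-- The ring homomorphism `ℤ[X₀, X₁][1 / Xᵢ]₀ → A` sending `Xⱼ / Xᵢ` to `vⱼ / vᵢ`. -/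
noncomputable def chartHom (i : Fin 2) (v : Fin 2 → A) (hv : IsUnit (v i)) :
    Away grading.{u} (X i) →+* A :=
  evalAway v (X i) (by rwa [evalHom_X])

lemma chartHom_ratio_mul (i j : Fin 2) (v : Fin 2 → A) (hv : IsUnit (v i)) :
    chartHom.{u} i v hv (ratio i j) * v i = v j := by
  simpa only [evalHom_X, chartHom] using
    evalAway_mul_eq (v := v) (by rwa [evalHom_X]) (val_ratio_mul.{u} i j)

lemma eq_chartHom {i : Fin 2} {v : Fin 2 → A} (hv : IsUnit (v i))
    {f : Away grading.{u} (X i) →+* A} (hf : ∀ j, f (ratio i j) * v i = v j) :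
    f = chartHom i v hv :=
  ringHom_away_ext fun j ↦ hv.mul_right_cancel ((hf j).trans (chartHom_ratio_mul i j v hv).symm)

lemma chartHom_eq_chartHom_iff {i : Fin 2} {v w : Fin 2 → A} {hv : IsUnit (v i)}
    {hw : IsUnit (w i)} :
    chartHom.{u} i v hv = chartHom i w hw ↔ ∀ j, v j * w i = v i * w j := by
  refine ⟨fun h j ↦ ?_, fun h ↦ eq_chartHom hw fun j ↦ hv.mul_right_cancel ?_⟩
  · rw [← chartHom_ratio_mul.{u} i j v hv, ← chartHom_ratio_mul.{u} i j w hw, h]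
    ring
  · linear_combination w i * chartHom_ratio_mul.{u} i j v hv + h j

lemma evalAway_comp_awayMap {i k : Fin 2} {v : Fin 2 → A} (hi : IsUnit (v i))
    {x : CoordRing.{u}} (hx : x = X i * X k) (hv : IsUnit (evalHom v x)) :
    (evalAway v x hv).comp (awayMap grading (X_mem_grading k) hx) = chartHom i v hi :=
  eq_chartHom hi fun j ↦ by
    simpa only [evalHom_X, RingHom.comp_apply] using
      evalAway_mul_eq hv (val_awayMap_ratio_mul i j k hx)

/-- The inclusion of the chart `{Xᵢ ≠ 0}`, as a morphism from the spectrum of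
`ℤ[X₀, X₁][1 / Xᵢ]₀`. -/
noncomputable def chartι (i : Fin 2) : Spec (.of (Away grading.{u} (X i))) ⟶ P1Z.{u} :=
  Proj.awayι grading (X i) (X_mem_grading i) one_pos

instance (i : Fin 2) : IsOpenImmersion (chartι.{u} i) :=
  inferInstanceAs (IsOpenImmersion (Proj.awayι grading (X i) (X_mem_grading i) one_pos))

lemma opensRange_chartι (i : Fin 2) : (chartι.{u} i).opensRange = chart i :=
  Proj.opensRange_awayι grading (X i) (X_mem_grading i) one_pos

lemma SpecMap_awayMap_chartι_eq {i j : Fin 2} {x : CoordRing.{u}} (hij : x = X i * X j)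
    (hji : x = X j * X i) :
    Spec.map (CommRingCat.ofHom (awayMap grading (X_mem_grading j) hij)) ≫ chartι i =
      Spec.map (CommRingCat.ofHom (awayMap grading (X_mem_grading i) hji)) ≫ chartι j :=
  (Proj.SpecMap_awayMap_awayι grading (X_mem_grading i) one_pos (X_mem_grading j) hij).trans
    (Proj.SpecMap_awayMap_awayι grading (X_mem_grading j) one_pos (X_mem_grading i) hji).symm

lemma chartι_preimage_chart (i k : Fin 2) :
    chartι.{u} i ⁻¹ᵁ chart k = PrimeSpectrum.basicOpen (ratio i k) := by
  have h : Away.isLocalizationElem (X_mem_grading.{u} i) (X_mem_grading k) = ratio i k := by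
    apply val_injective
    simp [ratio, Away.isLocalizationElem]
  rw [← h]
  exact Proj.awayι_preimage_basicOpen grading (X_mem_grading i) one_pos (X_mem_grading k) one_pos

variable {T T' : Scheme.{u}}

/-- The `T`-valued point of the projective line with homogeneous coordinates `(v₀ : v₁)`, for
global functions `v₀`, `v₁` on `T` of which `vᵢ` is invertible. -/
noncomputable def chartPoint (i : Fin 2) (v : Fin 2 → Γ(T, ⊤)) (hv : IsUnit (v i)) : T ⟶ P1Z.{u} :=
  T.toSpecΓ ≫ Spec.map (CommRingCat.ofHom (chartHom i v hv)) ≫ chartι i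

lemma comp_chartPoint (f : T' ⟶ T) {i : Fin 2} {v : Fin 2 → Γ(T, ⊤)} (hv : IsUnit (v i)) :
    f ≫ chartPoint i v hv = chartPoint i (f.appTop.hom ∘ v) (hv.map f.appTop.hom) := by
  have h : f.appTop.hom.comp (chartHom.{u} i v hv) =
      chartHom i (f.appTop.hom ∘ v) (hv.map f.appTop.hom) :=
    eq_chartHom _ fun j ↦ by
      rw [RingHom.comp_apply, Function.comp_apply, Function.comp_apply, ← map_mul,
        chartHom_ratio_mul]
  rw [chartPoint, chartPoint, ← h, CommRingCat.ofHom_comp, Spec.map_comp,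
    Scheme.toSpecΓ_naturality_assoc, Category.assoc]
  rfl

lemma toSpecΓ_comp_SpecMap_injective {R : CommRingCat.{u}} {φ ψ : R ⟶ Γ(T, ⊤)}
    (h : T.toSpecΓ ≫ Spec.map φ = T.toSpecΓ ≫ Spec.map ψ) : φ = ψ := by
  have := congrArg Scheme.Hom.appTop h
  rwa [Scheme.Hom.comp_appTop, Scheme.Hom.comp_appTop, Scheme.toSpecΓ_appTop,
    Scheme.ΓSpecIso_naturality, Scheme.ΓSpecIso_naturality, cancel_epi] at this

lemma exists_eq_toSpecΓ_comp_SpecMap {R : CommRingCat.{u}} (f : T ⟶ Spec R) :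
    ∃ φ : R ⟶ Γ(T, ⊤), f = T.toSpecΓ ≫ Spec.map φ :=
  ⟨(Scheme.ΓSpecIso R).inv ≫ f.appTop, by
    rw [Spec.map_comp, ← Scheme.toSpecΓ_naturality_assoc, toSpecΓ_SpecMap_ΓSpecIso_inv,
      Category.comp_id]⟩

lemma chartPoint_eq_chartPoint_iff {i : Fin 2} {v w : Fin 2 → Γ(T, ⊤)} {hv : IsUnit (v i)}
    {hw : IsUnit (w i)} :
    chartPoint i v hv = chartPoint i w hw ↔ ∀ j, v j * w i = v i * w j := by
  rw [← chartHom_eq_chartHom_iff.{u} (hv := hv) (hw := hw), chartPoint, chartPoint,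
    ← Category.assoc, ← Category.assoc, cancel_mono]
  refine ⟨fun h ↦ ?_, fun h ↦ by rw [h]⟩
  exact congrArg CommRingCat.Hom.hom (toSpecΓ_comp_SpecMap_injective h)

lemma chartPoint_eq_chartPoint {i j : Fin 2} {v : Fin 2 → Γ(T, ⊤)} (hi : IsUnit (v i))
    (hj : IsUnit (v j)) : chartPoint i v hi = chartPoint j v hj := by
  have hv : IsUnit (evalHom.{u} v (X i * X j)) := by
    rw [map_mul, evalHom_X, evalHom_X]
    exact hi.mul hj
  rw [chartPoint, chartPoint, ← evalAway_comp_awayMap hi rfl hv,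
    ← evalAway_comp_awayMap hj (mul_comm _ _) hv, CommRingCat.ofHom_comp, CommRingCat.ofHom_comp,
    Spec.map_comp, Spec.map_comp, Category.assoc, Category.assoc,
    SpecMap_awayMap_chartι_eq rfl (mul_comm _ _)]

lemma chartPoint_preimage_chart (i k : Fin 2) (v : Fin 2 → Γ(T, ⊤)) (hv : IsUnit (v i)) :
    chartPoint i v hv ⁻¹ᵁ chart k = T.basicOpen (v k) := by
  have h : v k = v i * chartHom i v hv (ratio.{u} i k) := by
    rw [mul_comm, chartHom_ratio_mul]
  calc chartPoint i v hv ⁻¹ᵁ chart k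
      = T.toSpecΓ ⁻¹ᵁ Spec.map (CommRingCat.ofHom (chartHom i v hv)) ⁻¹ᵁ
          PrimeSpectrum.basicOpen (ratio i k) := by
        rw [← chartι_preimage_chart]
        rfl
    _ = T.basicOpen (chartHom i v hv (ratio i k)) := T.toSpecΓ_preimage_basicOpen _
    _ = T.basicOpen (v k) := by
        rw [h, Scheme.basicOpen_mul, Scheme.basicOpen_of_isUnit _ hv, top_inf_eq]

lemma exists_eq_chartPoint {i : Fin 2} {g : T ⟶ P1Z.{u}} (hg : g ⁻¹ᵁ chart i = ⊤) :
    ∃ (v : Fin 2 → Γ(T, ⊤)) (hv : v i = 1), g = chartPoint i v (hv ▸ isUnit_one) := by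
  have hrange : Set.range g ⊆ Set.range (chartι.{u} i) := by
    rintro _ ⟨x, rfl⟩
    rw [← Scheme.Hom.coe_opensRange, opensRange_chartι]
    exact hg.ge (TopologicalSpace.Opens.mem_top x)
  obtain ⟨φ, hφ⟩ := exists_eq_toSpecΓ_comp_SpecMap (IsOpenImmersion.lift (chartι i) g hrange)
  let v (j : Fin 2) : Γ(T, ⊤) := φ.hom (ratio i j)
  have hv : v i = 1 := (congrArg φ.hom (ratio_self i)).trans (map_one _)
  have hφv : φ = CommRingCat.ofHom (chartHom i v (hv ▸ isUnit_one)) :=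
    CommRingCat.hom_ext (eq_chartHom (v := v) (hv ▸ isUnit_one) fun j ↦ by rw [hv, mul_one])
  exact ⟨v, hv, by rw [chartPoint, ← hφv, ← Category.assoc, ← hφ, IsOpenImmersion.lift_fac]⟩

lemma exists_mem_basicOpen_of_isCoprime {a b : Γ(T, ⊤)} (h : IsCoprime a b) (x : T) :
    x ∈ T.basicOpen a ∨ x ∈ T.basicOpen b := by
  obtain ⟨c, d, h⟩ := h
  have hx : x ∈ T.basicOpen (c * a + d * b) := by simp [h]
  refine (T.basicOpen_add_le _ _ hx).imp ?_ ?_ <;>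
    exact fun h ↦ ((T.basicOpen_mul _ _).le h).2

lemma isUnit_of_basicOpen_eq_top {a : Γ(T, ⊤)} (h : T.basicOpen a = ⊤) : IsUnit a := by
  refine T.toRingedSpace.isUnit_of_isUnit_germ ⊤ a fun x hx ↦ ?_
  exact (T.mem_basicOpen_top a x).mp (h.ge hx)

lemma exists_isUnit_ι_appTop {v : Fin 2 → Γ(T, ⊤)} (h : IsCoprime (v 0) (v 1)) (x : T) :
    ∃ (U : T.Opens) (i : Fin 2), x ∈ U ∧ IsUnit (U.ι.appTop.hom (v i)) := by
  have hunit (i : Fin 2) : IsUnit ((T.basicOpen (v i)).ι.appTop.hom (v i)) :=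
    isUnit_of_basicOpen_eq_top <| by
      rw [← Scheme.preimage_basicOpen_top, Scheme.Opens.ι_preimage_self]
  obtain hx | hx := exists_mem_basicOpen_of_isCoprime h x
  exacts [⟨_, 0, hx, hunit 0⟩, ⟨_, 1, hx, hunit 1⟩]

lemma eq_of_forall_appTop_ι_eq {a b : Γ(T, ⊤)}
    (h : ∀ x : T, ∃ U : T.Opens, x ∈ U ∧ U.ι.appTop.hom a = U.ι.appTop.hom b) : a = b := by
  choose U hxU hU using h
  refine TopCat.Sheaf.eq_of_locally_eq' T.sheaf (fun x ↦ (U x).ι ''ᵁ ⊤) ⊤ (fun x ↦ homOfLE le_top)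
    (fun x _ ↦ TopologicalSpace.Opens.mem_iSup.mpr ⟨x, ?_⟩) a b fun x ↦ ?_
  · simpa using hxU x
  · have := hU x
    rwa [Scheme.Opens.ι_appTop] at this

/-- `HasCoords g v` means that the morphism `g : T ⟶ ℙ¹` has homogeneous coordinates `(v₀ : v₁)` for
coprime global functions `v₀`, `v₁` on `T`. This is expressed through the functor of points, as `g`
is determined by its pullbacks to those schemes over `T` on which some `vᵢ` becomes invertible. -/
structure HasCoords (g : T ⟶ P1Z.{u}) (v : Fin 2 → Γ(T, ⊤)) : Prop where
  isCoprime : IsCoprime (v 0) (v 1)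
  comp_eq ⦃T' : Scheme.{u}⦄ (f : T' ⟶ T) (i : Fin 2) (h : IsUnit (f.appTop.hom (v i))) :
    f ≫ g = chartPoint i (f.appTop.hom ∘ v) h

lemma hasCoords_chartPoint {i : Fin 2} {v : Fin 2 → Γ(T, ⊤)} (hv : IsUnit (v i)) :
    HasCoords (chartPoint i v hv) v where
  isCoprime := isCoprime_of_isUnit hv
  comp_eq T' f j hj := by
    rw [comp_chartPoint]
    exact chartPoint_eq_chartPoint _ hj

lemma exists_hasCoords_of_preimage_chart_eq_top {g : T ⟶ P1Z.{u}} {i : Fin 2}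
    (hg : g ⁻¹ᵁ chart i = ⊤) : ∃ v, v i = 1 ∧ HasCoords g v := by
  obtain ⟨v, hv, rfl⟩ := exists_eq_chartPoint hg
  exact ⟨v, hv, hasCoords_chartPoint _⟩

namespace HasCoords

variable {g h : T ⟶ P1Z.{u}} {v w : Fin 2 → Γ(T, ⊤)}

protected lemma comp (hg : HasCoords g v) (f : T' ⟶ T) :
    HasCoords (f ≫ g) (f.appTop.hom ∘ v) where
  isCoprime := hg.isCoprime.map f.appTop.hom
  comp_eq T'' f' i hi := by
    rw [← Category.assoc]
    exact hg.comp_eq (f' ≫ f) i hi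

lemma unique (hg : HasCoords g v) (hh : HasCoords h v) : g = h :=
  Scheme.hom_ext_of_forall _ _ fun x ↦ by
    obtain ⟨U, i, hx, hi⟩ := exists_isUnit_ι_appTop hg.isCoprime x
    exact ⟨U, hx, (hg.comp_eq U.ι i hi).trans (hh.comp_eq U.ι i hi).symm⟩

lemma preimage_chart (hg : HasCoords g v) (k : Fin 2) : g ⁻¹ᵁ chart k = T.basicOpen (v k) := by
  ext x
  obtain ⟨U, i, hx, hi⟩ := exists_isUnit_ι_appTop hg.isCoprime x
  have hU : U.ι ⁻¹ᵁ g ⁻¹ᵁ chart k = U.ι ⁻¹ᵁ T.basicOpen (v k) := by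
    rw [← Scheme.Hom.comp_preimage, hg.comp_eq U.ι i hi, chartPoint_preimage_chart,
      Scheme.preimage_basicOpen_top]
    rfl
  exact SetLike.ext_iff.mp hU ⟨x, hx⟩

lemma isUnit_iff (hg : HasCoords g v) {i : Fin 2} : IsUnit (v i) ↔ g ⁻¹ᵁ chart i = ⊤ := by
  rw [hg.preimage_chart]
  exact ⟨T.basicOpen_of_isUnit, isUnit_of_basicOpen_eq_top⟩

lemma smul (hg : HasCoords g v) {c : Γ(T, ⊤)} (hc : IsUnit c) : HasCoords g (c • v) where
  isCoprime := (isCoprime_mul_unit_left hc _ _).mpr hg.isCoprime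
  comp_eq T' f i hi := by
    have hvi : IsUnit (f.appTop.hom (v i)) := by
      refine isUnit_of_mul_isUnit_right (x := f.appTop.hom c) ?_
      rwa [← map_mul]
    rw [hg.comp_eq f i hvi, chartPoint_eq_chartPoint_iff]
    intro j
    simp only [Function.comp_apply, Pi.smul_apply, smul_eq_mul, map_mul]
    ring

lemma wedge_eq_zero (hg : HasCoords g v) (hw : HasCoords g w) : wedge v w = 0 :=
  eq_of_forall_appTop_ι_eq fun x ↦ by
    obtain ⟨U, i, hx, hi⟩ := exists_isUnit_ι_appTop hg.isCoprime x
    have hwi : IsUnit (U.ι.appTop.hom (w i)) :=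
      (hw.comp U.ι).isUnit_iff.mpr ((hg.comp U.ι).isUnit_iff.mp hi)
    have h := chartPoint_eq_chartPoint_iff.mp <| (hg.comp_eq U.ι i hi).symm.trans
      (hw.comp_eq U.ι i hwi)
    exact ⟨U, hx, by rw [map_zero, ← map_wedge, wedge_eq_zero_of_forall h]⟩

lemma exists_eq_smul (hg : HasCoords g v) (hw : HasCoords g w) :
    ∃ c : Γ(T, ⊤), IsUnit c ∧ w = c • v := by
  obtain ⟨c, rfl⟩ := exists_eq_smul_of_wedge_eq_zero hg.isCoprime (hg.wedge_eq_zero hw)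
  exact ⟨c, isUnit_of_isCoprime_smul hw.isCoprime, rfl⟩

lemma eq_of_wedge_eq_zero (hg : HasCoords g v) (hh : HasCoords h w) (hvw : wedge v w = 0) :
    g = h := by
  obtain ⟨c, rfl⟩ := exists_eq_smul_of_wedge_eq_zero hg.isCoprime hvw
  exact (hg.smul (isUnit_of_isCoprime_smul hh.isCoprime)).unique hh

end HasCoords

lemma exists_forall_exists_hasCoords {ι : Type*} [Finite ι] (g : ι → (T ⟶ P1Z.{u})) (x : T) :
    ∃ U : T.Opens, x ∈ U ∧ ∀ k, ∃ v, HasCoords (U.ι ≫ g k) v := by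
  choose i hi using fun k ↦ exists_mem_chart (g k x)
  have hnhds : ∀ᶠ y in nhds x, ∀ k, y ∈ g k ⁻¹ᵁ chart (i k) :=
    Filter.eventually_all.mpr fun k ↦ (g k ⁻¹ᵁ chart (i k)).isOpen.mem_nhds (hi k)
  obtain ⟨U, hU, hUo, hx⟩ := eventually_nhds_iff.mp hnhds
  refine ⟨⟨U, hUo⟩, hx, fun k ↦ ?_⟩
  obtain ⟨v, -, hv⟩ := exists_hasCoords_of_preimage_chart_eq_top (i := i k)
    (g := Scheme.Opens.ι ⟨U, hUo⟩ ≫ g k) (top_unique fun y _ ↦ hU y.1 y.2 k)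
  exact ⟨v, hv⟩

section Carries

open Matrix

/-- The projective transformation of the line given by the invertible matrix `M` takes the
`T`-valued point `g` to the `T`-valued point `h`. -/
def Carries (M : GL (Fin 2) Γ(T, ⊤)) (g h : T ⟶ P1Z.{u}) : Prop :=
  ∃ v, HasCoords g v ∧ HasCoords h (M.val *ᵥ v)

namespace Carries

variable {M N : GL (Fin 2) Γ(T, ⊤)} {g h h' : T ⟶ P1Z.{u}} {v w : Fin 2 → Γ(T, ⊤)}

lemma comp (hM : Carries M g h) (f : T' ⟶ T) :
    Carries (M.map f.appTop.hom) (f ≫ g) (f ≫ h) := by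
  obtain ⟨v, hg, hh⟩ := hM
  refine ⟨_, hg.comp f, ?_⟩
  convert hh.comp f using 1
  ext i
  exact (RingHom.map_mulVec f.appTop.hom M.val v i).symm

lemma symm (hM : Carries M g h) : Carries M⁻¹ h g := by
  obtain ⟨v, hg, hh⟩ := hM
  refine ⟨_, hh, ?_⟩
  rwa [mulVec_mulVec, ← Units.val_mul, inv_mul_cancel, Units.val_one, one_mulVec]

lemma hasCoords (hM : Carries M g h) (hg : HasCoords g v) : HasCoords h (M.val *ᵥ v) := by
  obtain ⟨w, hg', hh⟩ := hM
  obtain ⟨c, hc, rfl⟩ := hg'.exists_eq_smul hg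
  rw [mulVec_smul]
  exact hh.smul hc

lemma unique (hM : Carries M g h) (hM' : Carries M g h') : h = h' := by
  obtain ⟨v, hg, hh⟩ := hM
  exact hh.unique (hM'.hasCoords hg)

lemma trans (hM : Carries M g h) (hN : Carries N h h') : Carries (N * M) g h' := by
  obtain ⟨v, hg, hh⟩ := hM
  refine ⟨v, hg, ?_⟩
  rw [Units.val_mul, ← mulVec_mulVec]
  exact hN.hasCoords hh

lemma exists_mulVec_eq_smul (hM : Carries M g g) (hg : HasCoords g v) :
    ∃ c : Γ(T, ⊤), M.val *ᵥ v = c • v := by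
  obtain ⟨c, -, hc⟩ := hg.exists_eq_smul (hM.hasCoords hg)
  exact ⟨c, hc⟩

lemma eq_of_forall_carries_self {p : Fin 3 → (T ⟶ P1Z.{u})} {v : Fin 3 → Fin 2 → Γ(T, ⊤)}
    (hp : ∀ k, HasCoords (p k) (v k)) (hv : Pairwise fun i j ↦ IsUnit (wedge (v i) (v j)))
    (hM : ∀ k, Carries M (p k) (p k)) (hgh : Carries M g h) : g = h := by
  choose c hc using fun k ↦ (hM k).exists_mulVec_eq_smul (hp k)
  obtain ⟨w, hg, hh⟩ := hgh
  rw [mulVec_eq_smul_of_forall hv hc] at hh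
  exact (hg.smul (isUnit_of_isCoprime_smul hh.isCoprime)).unique hh

end Carries

lemma exists_forall_carries {p q : Fin 3 → (T ⟶ P1Z.{u})} {v w : Fin 3 → Fin 2 → Γ(T, ⊤)}
    (hp : ∀ k, HasCoords (p k) (v k)) (hq : ∀ k, HasCoords (q k) (w k))
    (hv : Pairwise fun i j ↦ IsUnit (wedge (v i) (v j)))
    (hw : Pairwise fun i j ↦ IsUnit (wedge (w i) (w j))) :
    ∃ M : GL (Fin 2) Γ(T, ⊤), ∀ k, Carries M (p k) (q k) := by
  obtain ⟨M, hM⟩ := exists_mulVec_eq_smul hv hw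
  refine ⟨M, fun k ↦ ?_⟩
  obtain ⟨c, hc, hMk⟩ := hM k
  exact ⟨_, hp k, hMk ▸ (hq k).smul hc⟩

lemma HasCoords.exists_carries {g : T ⟶ P1Z.{u}} {v : Fin 2 → Γ(T, ⊤)} (hg : HasCoords g v)
    (M : GL (Fin 2) Γ(T, ⊤)) (x : T) : ∃ (U : T.Opens) (h : U.toScheme ⟶ P1Z.{u}),
      x ∈ U ∧ Carries (M.map U.ι.appTop.hom) (U.ι ≫ g) h := by
  obtain ⟨U, i, hx, hi⟩ := exists_isUnit_ι_appTop (isCoprime_mulVec M hg.isCoprime) x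
  have hMv : U.ι.appTop.hom ∘ (M.val *ᵥ v) =
      (M.map U.ι.appTop.hom).val *ᵥ (U.ι.appTop.hom ∘ v) :=
    funext fun j ↦ RingHom.map_mulVec U.ι.appTop.hom M.val v j
  exact ⟨U, chartPoint i (U.ι.appTop.hom ∘ (M.val *ᵥ v)) hi, hx, _, hg.comp U.ι,
    hMv ▸ hasCoords_chartPoint hi⟩

end Carries

section Affine

variable {B : Type*} [CommRing B]

/-- The homogeneous coordinates of the point with affine coordinate `b` in the chart `{Xᵢ ≠ 0}`: the
`i`-th one is `1` and the other one is `b`. -/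
def affineCoords (i : Fin 2) (b : A) : Fin 2 → A :=
  Function.update (fun _ ↦ b) i 1

lemma affineCoords_self (i : Fin 2) (b : A) : affineCoords i b i = 1 :=
  Function.update_self ..

lemma affineCoords_of_ne {i j : Fin 2} (h : j ≠ i) (b : A) : affineCoords i b j = b :=
  Function.update_of_ne h ..

lemma comp_affineCoords (f : A →+* B) (i : Fin 2) (b : A) :
    f ∘ affineCoords i b = affineCoords i (f b) := by
  rw [affineCoords, affineCoords, Function.comp_update, map_one]
  rfl

lemma eq_affineCoords {i j : Fin 2} (h : j ≠ i) {v : Fin 2 → A} (hv : v i = 1) :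
    v = affineCoords i (v j) := by
  ext k
  obtain rfl | hk := eq_or_ne k i
  · rw [hv, affineCoords_self]
  · rw [affineCoords_of_ne hk, show k = j by omega]

lemma wedge_affineCoords_self_eq_zero_iff {i : Fin 2} {b c : A} :
    wedge (affineCoords i b) (affineCoords i c) = 0 ↔ b = c := by
  fin_cases i <;> simp [wedge, affineCoords, sub_eq_zero, eq_comm]

lemma wedge_affineCoords_eq_zero_iff {i j : Fin 2} (h : i ≠ j) {b c : A} :
    wedge (affineCoords i b) (affineCoords j c) = 0 ↔ b * c = 1 := by
  obtain ⟨rfl, rfl⟩ | ⟨rfl, rfl⟩ : i = 0 ∧ j = 1 ∨ i = 1 ∧ j = 0 := by omega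
  · simpa [wedge, affineCoords, sub_eq_zero] using eq_comm
  · simp [wedge, affineCoords, sub_eq_zero]

/-- The `T`-valued point of the projective line with affine coordinate `b` in the chart
`{Xᵢ ≠ 0}`. -/
noncomputable def affinePoint (i : Fin 2) (b : Γ(T, ⊤)) : T ⟶ P1Z.{u} :=
  chartPoint i (affineCoords i b) (affineCoords_self i b ▸ isUnit_one)

lemma hasCoords_affinePoint (i : Fin 2) (b : Γ(T, ⊤)) :
    HasCoords (affinePoint i b) (affineCoords i b) :=
  hasCoords_chartPoint _

lemma comp_affinePoint (f : T' ⟶ T) (i : Fin 2) (b : Γ(T, ⊤)) :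
    f ≫ affinePoint i b = affinePoint i (f.appTop.hom b) := by
  have h := (hasCoords_affinePoint i b).comp f
  rw [comp_affineCoords] at h
  exact h.unique (hasCoords_affinePoint i _)

lemma affinePoint_injective (i : Fin 2) : Function.Injective (affinePoint (T := T) i) :=
  fun b c h ↦ wedge_affineCoords_self_eq_zero_iff.mp
    ((h ▸ hasCoords_affinePoint i b).wedge_eq_zero (hasCoords_affinePoint i c))

lemma affinePoint_eq_affinePoint_iff {i j : Fin 2} (h : i ≠ j) {b c : Γ(T, ⊤)} :
    affinePoint i b = affinePoint j c ↔ b * c = 1 := by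
  rw [← wedge_affineCoords_eq_zero_iff h]
  exact ⟨fun h ↦ (h ▸ hasCoords_affinePoint i b).wedge_eq_zero (hasCoords_affinePoint j c),
    (hasCoords_affinePoint i b).eq_of_wedge_eq_zero (hasCoords_affinePoint j c)⟩

lemma affinePoint_preimage_chart_self (i : Fin 2) (b : Γ(T, ⊤)) :
    affinePoint i b ⁻¹ᵁ chart i = ⊤ := by
  rw [(hasCoords_affinePoint i b).preimage_chart, affineCoords_self, Scheme.basicOpen_one]

lemma affinePoint_preimage_chart {i j : Fin 2} (h : i ≠ j) (b : Γ(T, ⊤)) :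
    affinePoint i b ⁻¹ᵁ chart j = T.basicOpen b := by
  rw [(hasCoords_affinePoint i b).preimage_chart, affineCoords_of_ne h.symm]

lemma exists_eq_affinePoint {i : Fin 2} {g : T ⟶ P1Z.{u}} (hg : g ⁻¹ᵁ chart i = ⊤) :
    ∃ b, g = affinePoint i b := by
  obtain ⟨j, hj⟩ := exists_ne i
  obtain ⟨v, hv, hgv⟩ := exists_hasCoords_of_preimage_chart_eq_top hg
  rw [eq_affineCoords hj hv] at hgv
  exact ⟨v j, hgv.unique (hasCoords_affinePoint i _)⟩

end Affine

end P1Z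

namespace P1

open P1Z

variable {S T T' : Scheme.{u}}

/-- The projection `ℙ¹_S ⟶ ℙ¹_ℤ`. -/
noncomputable def toP1Z (S : Scheme.{u}) : P1 S ⟶ P1Z.{u} :=
  pullback.snd (terminal.from S) (terminal.from P1Z)

/-- The `T`-valued point of `ℙ¹_S` over a `T`-valued point of `S` determined by a `T`-valued point
of `ℙ¹_ℤ`. -/
noncomputable def lift (a : T ⟶ S) (g : T ⟶ P1Z.{u}) : T ⟶ P1 S :=
  pullback.lift a g (terminal.hom_ext _ _)

@[simp]
lemma lift_proj (a : T ⟶ S) (g : T ⟶ P1Z.{u}) : lift a g ≫ P1proj S = a :=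
  pullback.lift_fst _ _ _

@[simp]
lemma lift_toP1Z (a : T ⟶ S) (g : T ⟶ P1Z.{u}) : lift a g ≫ toP1Z S = g :=
  pullback.lift_snd _ _ _

lemma hom_ext {t h : T ⟶ P1 S} (hproj : t ≫ P1proj S = h ≫ P1proj S)
    (htoP1Z : t ≫ toP1Z S = h ≫ toP1Z S) : t = h :=
  pullback.hom_ext hproj htoP1Z

lemma appTop_fromSpecResidueField_eq_zero {a : Γ(T, ⊤)} {x : T} (hx : x ∉ T.basicOpen a) :
    (T.fromSpecResidueField x).appTop.hom a = 0 := by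
  rw [← basicOpen_eq_bot_iff, ← Scheme.preimage_basicOpen_top, eq_bot_iff]
  intro y hy
  refine hx ?_
  rwa [← T.fromSpecResidueField_apply x y]

lemma isUnit_wedge_of_disjoint {s s' : S ⟶ P1 S} (hs : s ≫ P1proj S = 𝟙 S)
    (hs' : s' ≫ P1proj S = 𝟙 S) (hdisj : Disjoint (Set.range s) (Set.range s')) {a : T ⟶ S}
    {v w : Fin 2 → Γ(T, ⊤)} (hv : HasCoords (a ≫ s ≫ toP1Z S) v)
    (hw : HasCoords (a ≫ s' ≫ toP1Z S) w) : IsUnit (wedge v w) := by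
  refine isUnit_of_basicOpen_eq_top (top_unique fun x _ ↦ ?_)
  by_contra hx
  let f := T.fromSpecResidueField x
  have hf : wedge (f.appTop.hom ∘ v) (f.appTop.hom ∘ w) = 0 := by
    rw [map_wedge, appTop_fromSpecResidueField_eq_zero hx]
  have heq : (f ≫ a) ≫ s = (f ≫ a) ≫ s' := by
    refine hom_ext ?_ ?_
    · simp only [Category.assoc, hs, hs']
    · simpa only [Category.assoc] using (hv.comp f).eq_of_wedge_eq_zero (hw.comp f) hf
  obtain ⟨y⟩ : Nonempty (Spec (T.residueField x)) := inferInstance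
  refine Set.disjoint_left.mp hdisj ⟨(f ≫ a) y, rfl⟩ ⟨(f ≫ a) y, ?_⟩
  exact congrArg (fun g : Spec (T.residueField x) ⟶ P1 S ↦ g y) heq.symm

/-- A triple of sections of `ℙ¹_S ⟶ S` with pairwise disjoint images. -/
structure IsDisjointTriple (s : Fin 3 → (S ⟶ P1 S)) : Prop where
  comp_proj (k : Fin 3) : s k ≫ P1proj S = 𝟙 S
  disjoint : Pairwise fun i j ↦ Disjoint (Set.range (s i)) (Set.range (s j))

lemma IsDisjointTriple.isUnit_wedge {s : Fin 3 → (S ⟶ P1 S)} (hs : IsDisjointTriple s) {a : T ⟶ S}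
    {v : Fin 3 → Fin 2 → Γ(T, ⊤)} (hv : ∀ k, HasCoords (a ≫ s k ≫ toP1Z S) (v k)) :
    Pairwise fun i j ↦ IsUnit (wedge (v i) (v j)) := fun i j hij ↦
  isUnit_wedge_of_disjoint (hs.comp_proj i) (hs.comp_proj j) (hs.disjoint hij) (hv i) (hv j)

/-- Two `T`-valued points of `ℙ¹_S` over the same `T`-valued point of `S` correspond to each other
with respect to the triples of sections `s` and `s'` if some projective transformation over `T`
carries `s` to `s'` and the first point to the second. -/
def Corresponds (s s' : Fin 3 → (S ⟶ P1 S)) ⦃T : Scheme.{u}⦄ (t h : T ⟶ P1 S) : Prop :=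
  t ≫ P1proj S = h ≫ P1proj S ∧ ∃ M : GL (Fin 2) Γ(T, ⊤),
    (∀ k, Carries M ((t ≫ P1proj S) ≫ s k ≫ toP1Z S) ((t ≫ P1proj S) ≫ s' k ≫ toP1Z S)) ∧
      Carries M (t ≫ toP1Z S) (h ≫ toP1Z S)

namespace Corresponds

variable {s s' : Fin 3 → (S ⟶ P1 S)} {t h h' : T ⟶ P1 S}

lemma symm (hth : Corresponds s s' t h) : Corresponds s' s h t := by
  obtain ⟨hproj, M, hs, hM⟩ := hth
  exact ⟨hproj.symm, M⁻¹, fun k ↦ hproj ▸ (hs k).symm, hM.symm⟩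

lemma comp (hth : Corresponds s s' t h) (f : T' ⟶ T) : Corresponds s s' (f ≫ t) (f ≫ h) := by
  obtain ⟨hproj, M, hs, hM⟩ := hth
  refine ⟨by simp only [Category.assoc, hproj], M.map f.appTop.hom, fun k ↦ ?_, ?_⟩
  · simpa only [Category.assoc] using (hs k).comp f
  · simpa only [Category.assoc] using hM.comp f

lemma unique (hs' : IsDisjointTriple s') (h₁ : Corresponds s s' t h) (h₂ : Corresponds s s' t h') :
    h = h' := by
  obtain ⟨hproj, M, hM, hMt⟩ := h₁
  obtain ⟨hproj', N, hN, hNt⟩ := h₂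
  have hM' := hM
  choose v _ hv using hM'
  exact hom_ext (hproj.symm.trans hproj') <| Carries.eq_of_forall_carries_self hv
    (hs'.isUnit_wedge hv) (fun k ↦ (hM k).symm.trans (hN k)) (hMt.symm.trans hNt)

lemma comp_eq (hs : IsDisjointTriple s) (hs' : IsDisjointTriple s') {a : T ⟶ S} {k : Fin 3}
    (h₁ : Corresponds s s' (a ≫ s k) h) : a ≫ s' k = h := by
  obtain ⟨hproj, M, hM, hMt⟩ := h₁
  have ha : (a ≫ s k) ≫ P1proj S = a := by
    rw [Category.assoc, hs.comp_proj, Category.comp_id]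
  refine hom_ext ?_ ?_
  · rw [← hproj, ha, Category.assoc, hs'.comp_proj, Category.comp_id]
  · have hMk := hM k
    rw [ha, ← Category.assoc, ← Category.assoc] at hMk
    exact hMk.unique hMt

lemma exists_local (hs : IsDisjointTriple s) (hs' : IsDisjointTriple s') (x : P1 S) :
    ∃ (T : Scheme.{u}) (t h : T ⟶ P1 S), IsOpenImmersion t ∧ x ∈ Set.range t ∧
      Corresponds s s' t h := by
  obtain ⟨U, hxU, hU⟩ := exists_forall_exists_hasCoords
    (Sum.elim (Sum.elim (P1proj S ≫ s · ≫ toP1Z S) (P1proj S ≫ s' · ≫ toP1Z S))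
      fun _ : Unit ↦ toP1Z S) x
  choose v hv using fun k ↦ hU (.inl (.inl k))
  choose w hw using fun k ↦ hU (.inl (.inr k))
  obtain ⟨z, hz⟩ := hU (.inr ())
  obtain ⟨M, hM⟩ := exists_forall_carries hv hw (hs.isUnit_wedge (a := U.ι ≫ P1proj S) hv)
    (hs'.isUnit_wedge (a := U.ι ≫ P1proj S) hw)
  obtain ⟨V, g, hxV, hg⟩ := hz.exists_carries M ⟨x, hxU⟩
  refine ⟨V, V.ι ≫ U.ι, lift ((V.ι ≫ U.ι) ≫ P1proj S) g, inferInstance, ⟨⟨_, hxV⟩, rfl⟩,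
    (lift_proj _ _).symm, M.map V.ι.appTop.hom, fun k ↦ ?_, ?_⟩
  · simpa using (hM k).comp V.ι
  · simpa using hg

lemma isLocallyFunctional (hs : IsDisjointTriple s) (hs' : IsDisjointTriple s') :
    IsLocallyFunctional (Corresponds s s') where
  comp _ _ f _ _ hth := hth.comp f
  unique _ _ _ _ := unique hs'
  exists_local := exists_local hs hs'

end Corresponds

lemma exists_iso_of_isDisjointTriple {s s' : Fin 3 → (S ⟶ P1 S)} (hs : IsDisjointTriple s)
    (hs' : IsDisjointTriple s') :
    ∃ e : P1 S ≅ P1 S, e.hom ≫ P1proj S = P1proj S ∧ ∀ k, s k ≫ e.hom = s' k := by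
  have hP := Corresponds.isLocallyFunctional hs hs'
  have hP' := Corresponds.isLocallyFunctional hs' hs
  obtain ⟨e, he⟩ := hP.exists_iso
    { comp := fun _ _ f _ _ hth ↦ hth.comp f
      unique := fun _ _ _ _ h₁ h₂ ↦ hP'.unique h₁.symm h₂.symm
      exists_local := fun x ↦ by
        obtain ⟨T, t, h, ht, hx, hth⟩ := hP'.exists_local x
        exact ⟨T, t, h, ht, hx, hth.symm⟩ }
  obtain ⟨𝒰, h, hU⟩ := hP.exists_openCover
  refine ⟨e, Scheme.Cover.hom_ext 𝒰 _ _ fun i ↦ ?_, fun k ↦ ?_⟩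
  · rw [← Category.assoc, he (hU i), (hU i).1]
  · refine Scheme.Cover.hom_ext (𝒰.pullback₁ (s k)) _ _ fun i ↦ ?_
    have hcorr : Corresponds s s' (pullback.fst (s k) (𝒰.f i) ≫ s k)
        (pullback.snd (s k) (𝒰.f i) ≫ h i) :=
      pullback.condition (f := s k) ▸ (hU i).comp _
    exact (pullback.condition_assoc _).trans <|
      (congrArg (_ ≫ ·) (he (hU i))).trans (hcorr.comp_eq hs hs').symm

section Rigidity

open Polynomial

/-- The section of `ℙ¹_S ⟶ S` with affine coordinate `b` in the chart `{Xᵢ ≠ 0}`. -/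
noncomputable def affineSection (i : Fin 2) (b : Γ(S, ⊤)) : S ⟶ P1 S :=
  lift (𝟙 S) (affinePoint i b)

lemma comp_affineSection (a : T ⟶ S) (i : Fin 2) (b : Γ(S, ⊤)) :
    a ≫ affineSection i b = lift a (affinePoint i (a.appTop.hom b)) := by
  refine hom_ext ?_ ?_ <;> simp [affineSection, comp_affinePoint]

lemma fromSpecResidueField_preimage_eq_top {X : Scheme.{u}} {x : X} {U : X.Opens} (hU : x ∈ U) :
    X.fromSpecResidueField x ⁻¹ᵁ U = ⊤ := top_unique fun y _ ↦ by
  change X.fromSpecResidueField x y ∈ U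
  rwa [Scheme.fromSpecResidueField_apply]

lemma fromSpecResidueField_preimage_eq_bot {X : Scheme.{u}} {x : X} {U : X.Opens} (hU : x ∉ U) :
    X.fromSpecResidueField x ⁻¹ᵁ U = ⊥ := by
  refine eq_bot_iff.mpr fun y (hy : X.fromSpecResidueField x y ∈ U) ↦ hU ?_
  rwa [Scheme.fromSpecResidueField_apply] at hy

lemma mem_range_of_fromSpecResidueField_eq {X Y : Scheme.{u}} {f : Y ⟶ X} {x : X}
    {t : Spec (X.residueField x) ⟶ Y} (h : t ≫ f = X.fromSpecResidueField x) :
    x ∈ Set.range f := by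
  obtain ⟨y⟩ : Nonempty (Spec (X.residueField x)) := inferInstance
  exact ⟨t y, by rw [← Scheme.Hom.comp_apply, h, Scheme.fromSpecResidueField_apply]⟩

lemma affineSection_preimage_chart_self (i : Fin 2) (b : Γ(S, ⊤)) :
    affineSection i b ⁻¹ᵁ toP1Z S ⁻¹ᵁ chart i = ⊤ := by
  rw [← Scheme.Hom.comp_preimage, affineSection, lift_toP1Z, affinePoint_preimage_chart_self]

lemma affineSection_zero_preimage_chart {i j : Fin 2} (h : i ≠ j) :
    affineSection i (0 : Γ(S, ⊤)) ⁻¹ᵁ toP1Z S ⁻¹ᵁ chart j = ⊥ := by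
  rw [← Scheme.Hom.comp_preimage, affineSection, lift_toP1Z, affinePoint_preimage_chart h,
    Scheme.basicOpen_zero]

lemma mem_range_affineSection_zero {i j : Fin 2} (h : i ≠ j) {x : P1 S}
    (hx : x ∉ toP1Z S ⁻¹ᵁ chart j) : x ∈ Set.range (affineSection i (0 : Γ(S, ⊤))) := by
  have hi : x ∈ toP1Z S ⁻¹ᵁ chart i := mem_chart_of_notMem (x := toP1Z S x) h hx
  obtain ⟨b, hb⟩ : ∃ b, (P1 S).fromSpecResidueField x ≫ toP1Z S = affinePoint i b :=
    exists_eq_affinePoint <| by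
      rw [Scheme.Hom.comp_preimage, fromSpecResidueField_preimage_eq_top hi]
  have hb₀ : b = 0 := by
    rw [← basicOpen_eq_bot_iff, ← affinePoint_preimage_chart h, ← hb, Scheme.Hom.comp_preimage,
      fromSpecResidueField_preimage_eq_bot hx]
  refine mem_range_of_fromSpecResidueField_eq (t := (P1 S).fromSpecResidueField x ≫ P1proj S) ?_
  rw [comp_affineSection, map_zero, ← hb₀]
  exact hom_ext (lift_proj _ _) ((lift_toP1Z _ _).trans hb.symm)

lemma mem_range_affineSection_zero_iff {i j : Fin 2} (h : i ≠ j) (x : P1 S) :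
    x ∈ Set.range (affineSection i (0 : Γ(S, ⊤))) ↔ x ∉ toP1Z S ⁻¹ᵁ chart j := by
  refine ⟨?_, mem_range_affineSection_zero h⟩
  rintro ⟨y, rfl⟩ (hy : y ∈ affineSection i (0 : Γ(S, ⊤)) ⁻¹ᵁ toP1Z S ⁻¹ᵁ chart j)
  rwa [affineSection_zero_preimage_chart h] at hy

/-- The standard sections `0 = (1 : 0)`, `∞ = (0 : 1)` and `1 = (1 : 1)` of `ℙ¹_S ⟶ S`. -/
noncomputable def standardTriple (S : Scheme.{u}) : Fin 3 → (S ⟶ P1 S) :=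
  ![affineSection 0 0, affineSection 1 0, affineSection 0 1]

lemma affineSection_zero_one : affineSection 0 (1 : Γ(S, ⊤)) = affineSection 1 1 :=
  congrArg (lift (𝟙 S)) ((affinePoint_eq_affinePoint_iff zero_ne_one).mpr (one_mul 1))

lemma disjoint_range_affineSection_zero {i : Fin 2} {s : S ⟶ P1 S} {j : Fin 2} (h : i ≠ j)
    (hs : s ⁻¹ᵁ toP1Z S ⁻¹ᵁ chart j = ⊤) :
    Disjoint (Set.range (affineSection i (0 : Γ(S, ⊤)))) (Set.range s) := by
  rw [Set.disjoint_left]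
  rintro x hx ⟨y, rfl⟩
  exact (mem_range_affineSection_zero_iff h _).mp hx (hs.ge (TopologicalSpace.Opens.mem_top y))

lemma isDisjointTriple_standardTriple (S : Scheme.{u}) : IsDisjointTriple (standardTriple S) where
  comp_proj k := by
    fin_cases k <;> exact lift_proj _ _
  disjoint := by
    have h₀₁ := disjoint_range_affineSection_zero zero_ne_one
      (affineSection_preimage_chart_self 1 (0 : Γ(S, ⊤)))
    have h₀₂ := disjoint_range_affineSection_zero zero_ne_one
      (affineSection_zero_one (S := S) ▸ affineSection_preimage_chart_self 1 (1 : Γ(S, ⊤)))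
    have h₁₂ := disjoint_range_affineSection_zero one_ne_zero
      (affineSection_preimage_chart_self 0 (1 : Γ(S, ⊤)))
    intro i j hij
    fin_cases i <;> fin_cases j
    exacts [absurd rfl hij, h₀₁, h₀₂, h₀₁.symm, absurd rfl hij, h₁₂, h₀₂.symm, h₁₂.symm,
      absurd rfl hij]

variable {R A B : CommRingCat.{u}}

/-- The `A`-valued point of `ℙ¹_S` over the `A`-valued point `a` of `S` with affine coordinate `c`
in the chart `{Xᵢ ≠ 0}`. -/
noncomputable def specPoint (i : Fin 2) (a : Spec A ⟶ S) (c : A) : Spec A ⟶ P1 S :=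
  lift a (affinePoint i ((Scheme.ΓSpecIso A).inv.hom c))

lemma specPoint_proj (i : Fin 2) (a : Spec A ⟶ S) (c : A) : specPoint i a c ≫ P1proj S = a :=
  lift_proj _ _

lemma SpecMap_comp_specPoint (φ : A ⟶ B) (i : Fin 2) (a : Spec A ⟶ S) (c : A) :
    Spec.map φ ≫ specPoint i a c = specPoint i (Spec.map φ ≫ a) (φ.hom c) := by
  have hφ : (Spec.map φ).appTop.hom ((Scheme.ΓSpecIso A).inv.hom c) =
      (Scheme.ΓSpecIso B).inv.hom (φ.hom c) :=
    congrArg (fun f ↦ f.hom c) (Scheme.ΓSpecIso_inv_naturality φ).symm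
  refine hom_ext ?_ ?_ <;> simp [specPoint, comp_affinePoint, hφ]

lemma comp_affineSection_zero (a : Spec A ⟶ S) (i : Fin 2) :
    a ≫ affineSection i 0 = specPoint i a 0 := by
  rw [comp_affineSection, specPoint, map_zero, map_zero]

lemma comp_affineSection_one (a : Spec A ⟶ S) (i : Fin 2) :
    a ≫ affineSection i 1 = specPoint i a 1 := by
  rw [comp_affineSection, specPoint, map_one, map_one]

lemma specPoint_injective (i : Fin 2) (a : Spec A ⟶ S) : Function.Injective (specPoint i a) :=
  fun b c h ↦ by
    have hbc := congrArg (· ≫ toP1Z S) h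
    simp only [specPoint, lift_toP1Z] at hbc
    exact (Scheme.ΓSpecIso A).symm.commRingCatIsoToRingEquiv.injective
      (affinePoint_injective i hbc)

lemma specPoint_eq_specPoint_iff {i j : Fin 2} (h : i ≠ j) {a : Spec A ⟶ S} {b c : A} :
    specPoint i a b = specPoint j a c ↔ b * c = 1 := by
  rw [← map_eq_one_iff _ (Scheme.ΓSpecIso A).symm.commRingCatIsoToRingEquiv.injective, map_mul]
  refine Iff.trans ?_ (affinePoint_eq_affinePoint_iff h)
  refine ⟨fun hbc ↦ ?_, congrArg (lift a)⟩
  have := congrArg (· ≫ toP1Z S) hbc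
  simp only [specPoint, lift_toP1Z] at this
  exact this

lemma specPoint_preimage_chart (i : Fin 2) (a : Spec A ⟶ S) (c : A) :
    specPoint i a c ⁻¹ᵁ toP1Z S ⁻¹ᵁ chart i = ⊤ := by
  rw [← Scheme.Hom.comp_preimage, specPoint, lift_toP1Z, affinePoint_preimage_chart_self]

lemma exists_eq_specPoint {i : Fin 2} {t : Spec A ⟶ P1 S}
    (ht : t ⁻¹ᵁ toP1Z S ⁻¹ᵁ chart i = ⊤) : ∃ c, t = specPoint i (t ≫ P1proj S) c := by
  obtain ⟨b, hb⟩ := exists_eq_affinePoint (g := t ≫ toP1Z S) ht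
  refine ⟨(Scheme.ΓSpecIso A).hom.hom b, hom_ext (lift_proj _ _).symm ?_⟩
  rw [specPoint, lift_toP1Z, hb, Iso.hom_inv_id_apply]

/-- An endomorphism of `ℙ¹_S` over `S` fixing the sections `0`, `∞` and `1`. In each of the two
charts, the sections `0` and `∞` have affine coordinate `0` if they meet the chart. -/
structure FixesStandardSections (γ : P1 S ⟶ P1 S) : Prop where
  comp_proj : γ ≫ P1proj S = P1proj S
  zero (i : Fin 2) : affineSection i 0 ≫ γ = affineSection i 0
  one (i : Fin 2) : affineSection i 1 ≫ γ = affineSection i 1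

/-- The endomorphism `γ` of `ℙ¹_S` is given by the polynomial `p` on the chart `{Xᵢ ≠ 0}`, over the
`R`-valued point `a` of `S`. -/
def IsGivenBy (γ : P1 S ⟶ P1 S) (i : Fin 2) (a : Spec R ⟶ S) (p : R[X]) : Prop :=
  ∀ ⦃A : CommRingCat.{u}⦄ (φ : R ⟶ A) (c : A),
    specPoint i (Spec.map φ ≫ a) c ≫ γ = specPoint i (Spec.map φ ≫ a) (p.eval₂ φ.hom c)

namespace IsGivenBy

variable {γ δ : P1 S ⟶ P1 S} {i j : Fin 2} {a : Spec R ⟶ S} {p q : R[X]}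

lemma specPoint_comp (hp : IsGivenBy γ i a p) (c : R) :
    specPoint i a c ≫ γ = specPoint i a (p.eval c) := by
  simpa [eval₂_id] using hp (𝟙 R) c

lemma eval_zero (hp : IsGivenBy γ i a p) (hγ : FixesStandardSections γ) : p.eval 0 = 0 := by
  refine specPoint_injective i a ?_
  rw [← hp.specPoint_comp, ← comp_affineSection_zero, Category.assoc, hγ.zero]

lemma eval_one (hp : IsGivenBy γ i a p) (hγ : FixesStandardSections γ) : p.eval 1 = 1 := by
  refine specPoint_injective i a ?_
  rw [← hp.specPoint_comp, ← comp_affineSection_one, Category.assoc, hγ.one]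

lemma comp_eq_X (hp : IsGivenBy γ i a p) (hq : IsGivenBy δ i a q) (hγδ : γ ≫ δ = 𝟙 (P1 S)) :
    q.comp p = X := by
  let φ : R ⟶ .of R[X] := CommRingCat.ofHom C
  refine (specPoint_injective i (Spec.map φ ≫ a) ?_ : q.eval₂ C p = X)
  have hpX : specPoint i (Spec.map φ ≫ a) X ≫ γ = specPoint i (Spec.map φ ≫ a) p :=
    (hp φ X).trans (congrArg _ p.eval₂_C_X)
  refine (hq φ p).symm.trans ?_
  rw [← hpX, Category.assoc, hγδ, Category.comp_id]

lemma toLaurent_mul_invert_eq_one (hp : IsGivenBy γ i a p) (hq : IsGivenBy γ j a q) (hij : i ≠ j) :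
    toLaurent p * LaurentPolynomial.invert (toLaurent q) = 1 := by
  let φ : R ⟶ .of (LaurentPolynomial R) := CommRingCat.ofHom LaurentPolynomial.C
  rw [← eval₂_C_T_one, ← eval₂_C_T_neg_one]
  refine (specPoint_eq_specPoint_iff hij (a := Spec.map φ ≫ a)).mp ?_
  exact (hp φ _).symm.trans <| (congrArg (· ≫ γ) <|
    (specPoint_eq_specPoint_iff hij).mpr T_one_mul_T_neg_one).trans (hq φ _)

end IsGivenBy

namespace FixesStandardSections

variable {γ : P1 S ⟶ P1 S}

lemma inv [IsIso γ] (hγ : FixesStandardSections γ) : FixesStandardSections (inv γ) where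
  comp_proj := by rw [IsIso.inv_comp_eq, hγ.comp_proj]
  zero i := by rw [IsIso.comp_inv_eq, hγ.zero]
  one i := by rw [IsIso.comp_inv_eq, hγ.one]

lemma preimage_chart [IsIso γ] (hγ : FixesStandardSections γ) (i : Fin 2) :
    γ ⁻¹ᵁ toP1Z S ⁻¹ᵁ chart i = toP1Z S ⁻¹ᵁ chart i := by
  obtain ⟨j, hj⟩ := exists_ne i
  have hcomp (y : S) : γ (affineSection j 0 y) = affineSection j 0 y := by
    rw [← Scheme.Hom.comp_apply, hγ.zero]
  ext x
  refine not_iff_not.mp ?_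
  refine (mem_range_affineSection_zero_iff hj (γ x)).symm.trans
    (Iff.trans ?_ (mem_range_affineSection_zero_iff hj x))
  constructor
  · rintro ⟨y, hy⟩
    exact ⟨y, γ.homeomorph.injective ((hcomp y).trans hy)⟩
  · rintro ⟨y, rfl⟩
    exact ⟨y, (hcomp y).symm⟩

lemma exists_isGivenBy [IsIso γ] (hγ : FixesStandardSections γ) (i : Fin 2) (a : Spec R ⟶ S) :
    ∃ p, IsGivenBy γ i a p := by
  let ψ : R ⟶ .of R[X] := CommRingCat.ofHom C
  let t := specPoint i (Spec.map ψ ≫ a) X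
  obtain ⟨p, hp⟩ := exists_eq_specPoint (i := i) (t := t ≫ γ) <| by
    rw [Scheme.Hom.comp_preimage, hγ.preimage_chart, specPoint_preimage_chart]
  rw [Category.assoc, hγ.comp_proj, specPoint_proj] at hp
  refine ⟨p, fun A φ c ↦ ?_⟩
  let ε : .of R[X] ⟶ A := CommRingCat.ofHom (eval₂RingHom φ.hom c)
  have hψε : ψ ≫ ε = φ := CommRingCat.hom_ext (RingHom.ext fun r ↦ eval₂_C φ.hom c)
  have hε := congrArg (Spec.map ε ≫ ·) hp
  simp only [t, ← Category.assoc, SpecMap_comp_specPoint, ← Spec.map_comp, hψε] at hε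
  rwa [show ε.hom X = c from eval₂_X φ.hom c] at hε

lemma specPoint_comp [IsIso γ] (hγ : FixesStandardSections γ) (i : Fin 2) (a : Spec R ⟶ S) (c : R) :
    specPoint i a c ≫ γ = specPoint i a c := by
  obtain ⟨j, hj⟩ := exists_ne i
  obtain ⟨p, hp⟩ := hγ.exists_isGivenBy i a
  obtain ⟨p', hp'⟩ := hγ.inv.exists_isGivenBy i a
  obtain ⟨q, hq⟩ := hγ.exists_isGivenBy j a
  have hpX : p = X := eq_X_of_toLaurent_mul_invert_eq_one (hp.eval_zero hγ) (hp'.eval_zero hγ.inv)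
    (hq.eval_zero hγ) (hp.eval_one hγ) (hp.comp_eq_X hp' (IsIso.hom_inv_id γ))
    (hp.toLaurent_mul_invert_eq_one hq hj.symm)
  rw [hp.specPoint_comp, hpX, eval_X]

lemma eq_id [IsIso γ] (hγ : FixesStandardSections γ) : γ = 𝟙 (P1 S) := by
  refine Scheme.hom_ext_of_forall _ _ fun x ↦ ?_
  obtain ⟨i, hi⟩ := exists_mem_chart (toP1Z S x)
  obtain ⟨U, hU, hxU, hUi⟩ :=
    exists_isAffineOpen_mem_and_subset (U := toP1Z S ⁻¹ᵁ chart i) (x := x) hi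
  obtain ⟨c, hc⟩ := exists_eq_specPoint (t := hU.fromSpec) (i := i) <|
    top_unique (hU.fromSpec_preimage_self.ge.trans (Scheme.Hom.preimage_mono _ hUi))
  refine ⟨U, hxU, ?_⟩
  rw [← hU.isoSpec_hom_fromSpec, Category.assoc, Category.assoc, Category.comp_id, hc,
    hγ.specPoint_comp]

end FixesStandardSections

end Rigidity

lemma eq_id_of_standardTriple_comp {γ : P1 S ⟶ P1 S} [IsIso γ] (hγ : γ ≫ P1proj S = P1proj S)
    (hfix : ∀ k, standardTriple S k ≫ γ = standardTriple S k) : γ = 𝟙 (P1 S) := by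
  refine FixesStandardSections.eq_id ⟨hγ, Fin.forall_fin_two.mpr ⟨hfix 0, hfix 1⟩,
    Fin.forall_fin_two.mpr ⟨hfix 2, ?_⟩⟩
  rw [← affineSection_zero_one]
  exact hfix 2

lemma eq_id_of_isDisjointTriple {s : Fin 3 → (S ⟶ P1 S)} (hs : IsDisjointTriple s)
    {γ : P1 S ⟶ P1 S} [IsIso γ] (hγ : γ ≫ P1proj S = P1proj S) (hfix : ∀ k, s k ≫ γ = s k) :
    γ = 𝟙 (P1 S) := by
  obtain ⟨e, he, hes⟩ := exists_iso_of_isDisjointTriple (isDisjointTriple_standardTriple S) hs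
  have hconj : e.hom ≫ γ ≫ e.inv = 𝟙 (P1 S) := by
    refine eq_id_of_standardTriple_comp ?_ fun k ↦ ?_
    · rw [Category.assoc, Category.assoc, (Iso.inv_comp_eq e).mpr he.symm, hγ, he]
    · rw [← Category.assoc, hes, ← Category.assoc, hfix, Iso.comp_inv_eq, hes]
  rwa [← Iso.eq_inv_comp, Iso.comp_inv_eq, Category.comp_id, Iso.inv_hom_id] at hconj

end P1

/-- Let `S` be a scheme and `s₁, s₂, s₃, s₁′, s₂′, s₃′ : S → ℙ¹_S` six
sections of `ℙ¹_S → S` such that the images of `s₁, s₂, s₃` are pairwise disjoint and the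
images of `s₁′, s₂′, s₃′` are pairwise disjoint. Then there is a unique `S`-automorphism `β`
of `ℙ¹_S` with `β ∘ sᵢ = sᵢ′` for `i = 1, 2, 3`. -/
theorem stmt4 (S : Scheme.{u}) (s s' : Fin 3 → (S ⟶ P1 S))
    (hs : ∀ i, s i ≫ P1proj S = 𝟙 S) (hs' : ∀ i, s' i ≫ P1proj S = 𝟙 S)
    (hdisj : ∀ i j : Fin 3, i ≠ j →
      Disjoint (Set.range (s i).base) (Set.range (s j).base))
    (hdisj' : ∀ i j : Fin 3, i ≠ j →
      Disjoint (Set.range (s' i).base) (Set.range (s' j).base)) :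
    ∃! β : P1 S ⟶ P1 S, IsIso β ∧ β ≫ P1proj S = P1proj S ∧
      ∀ i : Fin 3, s i ≫ β = s' i := by
  have htriple : P1.IsDisjointTriple s := ⟨hs, fun i j ↦ hdisj i j⟩
  obtain ⟨e, he, hes⟩ := P1.exists_iso_of_isDisjointTriple htriple ⟨hs', fun i j ↦ hdisj' i j⟩
  refine ⟨e.hom, ⟨inferInstance, he, hes⟩, ?_⟩
  rintro β ⟨_, hβ, hβs⟩
  have hid : β ≫ e.inv = 𝟙 (P1 S) := by
    refine P1.eq_id_of_isDisjointTriple htriple ?_ fun k ↦ ?_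
    · rw [Category.assoc, (Iso.inv_comp_eq e).mpr he.symm, hβ]
    · rw [← Category.assoc, hβs, Iso.comp_inv_eq, hes]
  rwa [Iso.comp_inv_eq, Category.id_comp] at hid
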